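/- (Abstract first-order convergence of the implicit θ-scheme, 1/2 ≤ θ ≤ 1, in the L² norm.) Let V be a real inner product space, and let a : V × V → ℝ be a symmetric positive semidefinite bilinear form satisfying ‖v‖² ≤ C₀ a(v,v) for all v ∈ V, with C₀ > 0. Let τ > 0, N ≥ 1, T = Nτ, tⁿ = nτ, and θ ∈ [1/2, 1]. Let u : [0,T] → V be twice continuously differentiable and ρ : [0,T] → V continuously differentiable (in the norm of V), and suppose η⁰, …, η^N ∈ V satisfy, for each n = 1, …, N and every v ∈ V, ⟪(ηⁿ - η^{n-1})/τ, v⟫ + a(θ ηⁿ + (1-θ) η^{n-1}, v) = -⟪(ρ(tⁿ) - ρ(t^{n-1}))/τ, v⟫ + ⟪(u(tⁿ) - u(t^{n-1}))/τ - (θ u'(tⁿ) + (1-θ) u'(t^{n-1})), v⟫. Then ‖η^N‖² ≤ ‖η⁰‖² + C₀ ∫₀^T ‖ρ'(s)‖² ds + C₀ τ² ∫₀^T ‖u''(s)‖² ds. -/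

import Mathlib

open Set intervalIntegral
open scoped RealInnerProductSpace

/-!
Testing the scheme with `w = θ ηⁿ⁺¹ + (1 - θ) ηⁿ` turns the difference quotient into
`(‖ηⁿ⁺¹‖² - ‖ηⁿ‖² + (2 θ - 1) ‖ηⁿ⁺¹ - ηⁿ‖²) / (2 τ)`, whose last term is nonnegative for `θ ≥ 1/2`,
and coercivity absorbs the factor `‖w‖` of the source. What remains are the `L²` sizes of the two
source terms. On a step `[a, b]` both are increments of functions whose derivative is a scalar
kernel times the data: the kernel is `1` for `ρ`, and for the truncation error of `u` it is the
Peano kernel `c - s` with `c = a + (1 - θ) (b - a)`, because `s ↦ u s + (c - s) • u' s` has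
derivative `(c - s) • u'' s`. Cauchy–Schwarz in time gives the factor
`∫ₐᵇ (c - s)² ds = (θ² - θ + 1/3) (b - a)³`, at most `(b - a)³ / 3` for `0 ≤ θ ≤ 1`.
-/

section

open MeasureTheory

theorem sq_integral_inner_le {α E : Type*} [MeasurableSpace α] {μ : Measure α}
    [NormedAddCommGroup E] [InnerProductSpace ℝ E] {f g : α → E}
    (hf : MemLp f 2 μ) (hg : MemLp g 2 μ) :
    (∫ x, ⟪f x, g x⟫ ∂μ) ^ 2 ≤ (∫ x, ‖f x‖ ^ 2 ∂μ) * ∫ x, ‖g x‖ ^ 2 ∂μ := by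
  have inner_toLp {p q : α → E} (hp : MemLp p 2 μ) (hq : MemLp q 2 μ) :
      ⟪hp.toLp p, hq.toLp q⟫ = ∫ x, ⟪p x, q x⟫ ∂μ := by
    rw [L2.inner_def]
    refine integral_congr_ae ?_
    filter_upwards [hp.coeFn_toLp, hq.coeFn_toLp] with x hpx hqx
    rw [hpx, hqx]
  simpa only [inner_toLp, real_inner_self_eq_norm_sq, ← sq]
    using real_inner_mul_inner_self_le (hf.toLp f) (hg.toLp g)

theorem memLp_restrict_of_continuousOn {X E : Type*} [TopologicalSpace X] [MeasurableSpace X]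
    [OpensMeasurableSpace X] [T2Space X] {μ : Measure X} [IsFiniteMeasureOnCompacts μ]
    [NormedAddCommGroup E] {K : Set X} {g : X → E} (hK : IsCompact K) (hg : ContinuousOn g K)
    (p : ENNReal) : MemLp g p (μ.restrict K) := by
  have : IsFiniteMeasure (μ.restrict K) := isFiniteMeasure_restrict.2 hK.measure_lt_top.ne
  obtain ⟨C, hC⟩ := hK.exists_bound_of_continuousOn hg
  exact .of_bound (hg.aestronglyMeasurable_of_isCompact hK hK.measurableSet) C
    (ae_restrict_of_forall_mem hK.measurableSet hC)

theorem sum_integral_norm_sq_adjacent_intervals {E : Type*} [NormedAddCommGroup E] {g : ℝ → E}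
    {t : ℕ → ℝ} {N : ℕ} (ht : Monotone t)
    (hg : MemLp g 2 (volume.restrict (Icc (t 0) (t N)))) :
    ∑ n ∈ Finset.range N, ∫ s in t n..t (n + 1), ‖g s‖ ^ 2 = ∫ s in t 0..t N, ‖g s‖ ^ 2 :=
  sum_integral_adjacent_intervals fun n hn =>
    (intervalIntegrable_iff_integrableOn_Icc_of_le (ht n.le_succ)).2 <|
      hg.norm.integrable_sq.mono_measure <|
        Measure.restrict_mono (Icc_subset_Icc (ht n.zero_le) (ht hn)) le_rfl

variable {V : Type*} [NormedAddCommGroup V] [InnerProductSpace ℝ V]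

theorem inner_sub_eq_integral_inner_deriv {f f' : ℝ → V} {a b : ℝ} (v : V) (hab : a ≤ b)
    (hf : ∀ t ∈ Icc a b, HasDerivWithinAt f (f' t) (Icc a b) t)
    (hint : IntegrableOn (fun s => ⟪v, f' s⟫) (Icc a b)) :
    ⟪v, f b - f a⟫ = ∫ s in a..b, ⟪v, f' s⟫ := by
  rw [inner_sub_right]
  refine (integral_eq_sub_of_hasDerivAt_of_le (f := fun s => ⟪v, f s⟫) hab
    (continuousOn_const.inner fun t ht => (hf t ht).continuousWithinAt) (fun t ht => ?_)
    ((intervalIntegrable_iff_integrableOn_Icc_of_le hab).2 hint)).symm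
  have hderiv := (hf t (Ioo_subset_Icc_self ht)).hasDerivAt (Icc_mem_nhds ht.1 ht.2)
  simpa using (hasDerivAt_const t v).inner ℝ hderiv

theorem norm_sub_sq_le_integral_sq_mul_integral_norm_sq {f g : ℝ → V} {k : ℝ → ℝ} {a b : ℝ}
    (hab : a ≤ b) (hf : ∀ t ∈ Icc a b, HasDerivWithinAt f (k t • g t) (Icc a b) t)
    (hk : MemLp k 2 (volume.restrict (Icc a b))) (hg : MemLp g 2 (volume.restrict (Icc a b))) :
    ‖f b - f a‖ ^ 2 ≤ (∫ s in a..b, k s ^ 2) * ∫ s in a..b, ‖g s‖ ^ 2 := by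
  set x := f b - f a
  have hkx : MemLp (fun s => k s • x) 2 (volume.restrict (Icc a b)) :=
    (memLp_top_const x).smul hk
  have hint : IntegrableOn (fun s => ⟪x, k s • g s⟫) (Icc a b) := by
    simp only [real_inner_smul_right]
    exact hk.integrable_mul (hg.const_inner x)
  -- Testing the increment against itself avoids the `V`-valued integral of the derivative, which is
  -- `0` by convention when `V` is incomplete.
  have hincr : ∫ s in Icc a b, ⟪k s • x, g s⟫ = ‖x‖ ^ 2 := by
    rw [integral_Icc_eq_integral_Ioc, ← integral_of_le hab, ← real_inner_self_eq_norm_sq]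
    simpa only [real_inner_smul_left, real_inner_smul_right]
      using (inner_sub_eq_integral_inner_deriv x hab hf hint).symm
  have hcs := sq_integral_inner_le hkx hg
  simp only [hincr, norm_smul, mul_pow, Real.norm_eq_abs, sq_abs,
    MeasureTheory.integral_mul_const, integral_Icc_eq_integral_Ioc, ← integral_of_le hab] at hcs
  rcases (sq_nonneg ‖x‖).eq_or_lt with hzero | hpos
  · rw [← hzero]
    exact mul_nonneg (integral_nonneg hab fun _ _ => sq_nonneg _)
      (integral_nonneg hab fun _ _ => sq_nonneg _)
  · exact le_of_mul_le_mul_right (by linarith) hpos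

theorem sub_mul_norm_slope_sq_le {f g : ℝ → V} {k : ℝ → ℝ} {a b : ℝ} (hab : a < b)
    (hf : ∀ t ∈ Icc a b, HasDerivWithinAt f (k t • g t) (Icc a b) t)
    (hk : MemLp k 2 (volume.restrict (Icc a b))) (hg : MemLp g 2 (volume.restrict (Icc a b))) :
    (b - a) * ‖slope f a b‖ ^ 2 ≤ (∫ s in a..b, k s ^ 2) / (b - a) * ∫ s in a..b, ‖g s‖ ^ 2 := by
  have hba : 0 < b - a := sub_pos.2 hab
  calc (b - a) * ‖slope f a b‖ ^ 2
      = ‖f b - f a‖ ^ 2 / (b - a) := by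
        rw [slope_def_module, norm_smul, Real.norm_of_nonneg (inv_pos.2 hba).le]
        field_simp
    _ ≤ ((∫ s in a..b, k s ^ 2) * ∫ s in a..b, ‖g s‖ ^ 2) / (b - a) := by
        gcongr
        exact norm_sub_sq_le_integral_sq_mul_integral_norm_sq hab.le hf hk hg
    _ = _ := by ring

/-- The truncation error of the `θ`-scheme on a step from `s` to `t`: the difference quotient of
`u` minus the `θ`-weighted mean of the end-point derivatives. The derivative `u'` is a separate
argument, so that one-sided derivatives can be used at the ends of the time interval. -/
noncomputable def thetaDefect (θ : ℝ) (u u' : ℝ → V) (s t : ℝ) : V :=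
  slope u s t - (θ • u' t + (1 - θ) • u' s)

theorem thetaDefect_eq_slope (θ : ℝ) (u u' : ℝ → V) {a b : ℝ} (hab : a ≠ b) :
    thetaDefect θ u u' a b
      = slope (fun s => u s + (a + (1 - θ) * (b - a) - s) • u' s) a b := by
  have hba : b - a ≠ 0 := sub_ne_zero.2 hab.symm
  refine smul_right_injective V hba ?_
  simp only [thetaDefect, slope_def_module, smul_sub (b - a), smul_inv_smul₀ hba]
  module

theorem integral_sq_theta_peano_kernel (θ a b : ℝ) :
    ∫ s in a..b, (a + (1 - θ) * (b - a) - s) ^ 2 = (θ ^ 2 - θ + 1 / 3) * (b - a) ^ 3 := by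
  rw [integral_comp_sub_left (fun s => s ^ 2), integral_pow]
  push_cast
  ring

theorem sub_mul_norm_thetaDefect_sq_le {u u' u'' : ℝ → V} {a b : ℝ} (θ : ℝ) (hab : a < b)
    (hu : ∀ t ∈ Icc a b, HasDerivWithinAt u (u' t) (Icc a b) t)
    (hu' : ∀ t ∈ Icc a b, HasDerivWithinAt u' (u'' t) (Icc a b) t)
    (hu'' : MemLp u'' 2 (volume.restrict (Icc a b))) :
    (b - a) * ‖thetaDefect θ u u' a b‖ ^ 2
      ≤ (θ ^ 2 - θ + 1 / 3) * (b - a) ^ 2 * ∫ s in a..b, ‖u'' s‖ ^ 2 := by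
  set c := a + (1 - θ) * (b - a)
  have hderiv (t) (ht : t ∈ Icc a b) :
      HasDerivWithinAt (fun s => u s + (c - s) • u' s) ((c - t) • u'' t) (Icc a b) t := by
    have := (hu t ht).add (((hasDerivWithinAt_id t (Icc a b)).const_sub c).smul (hu' t ht))
    exact this.congr_deriv (by simp)
  have hkernel : MemLp (fun s => c - s) 2 (volume.restrict (Icc a b)) :=
    memLp_restrict_of_continuousOn isCompact_Icc (by fun_prop) 2
  have hslope := sub_mul_norm_slope_sq_le hab hderiv hkernel hu''
  rw [integral_sq_theta_peano_kernel, ← thetaDefect_eq_slope θ u u' hab.ne] at hslope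
  rwa [pow_succ (b - a) 2, ← mul_assoc, mul_div_cancel_right₀ _ (sub_pos.2 hab).ne'] at hslope

theorem sub_mul_norm_thetaDefect_sub_slope_sq_le {u u' u'' ρ ρ' : ℝ → V} {a b : ℝ} (θ : ℝ)
    (hab : a < b)
    (hu : ∀ t ∈ Icc a b, HasDerivWithinAt u (u' t) (Icc a b) t)
    (hu' : ∀ t ∈ Icc a b, HasDerivWithinAt u' (u'' t) (Icc a b) t)
    (hu'' : MemLp u'' 2 (volume.restrict (Icc a b)))
    (hρ : ∀ t ∈ Icc a b, HasDerivWithinAt ρ (ρ' t) (Icc a b) t)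
    (hρ' : MemLp ρ' 2 (volume.restrict (Icc a b))) :
    (b - a) * ‖thetaDefect θ u u' a b - slope ρ a b‖ ^ 2
      ≤ 2 * ((∫ s in a..b, ‖ρ' s‖ ^ 2)
        + (θ ^ 2 - θ + 1 / 3) * (b - a) ^ 2 * ∫ s in a..b, ‖u'' s‖ ^ 2) := by
  have hba : 0 < b - a := sub_pos.2 hab
  have hdefect := sub_mul_norm_thetaDefect_sq_le θ hab hu hu' hu''
  have hslope : (b - a) * ‖slope ρ a b‖ ^ 2 ≤ ∫ s in a..b, ‖ρ' s‖ ^ 2 := by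
    simpa [hba.ne'] using sub_mul_norm_slope_sq_le (k := fun _ => 1) hab (by simpa using hρ)
      (memLp_const 1) hρ'
  have hsub : ‖thetaDefect θ u u' a b - slope ρ a b‖ ^ 2
      ≤ 2 * (‖thetaDefect θ u u' a b‖ ^ 2 + ‖slope ρ a b‖ ^ 2) :=
    (by gcongr; exact norm_sub_le _ _ : _ ≤ (_ + _) ^ 2).trans add_sq_le
  linarith [mul_le_mul_of_nonneg_left hsub hba.le]

theorem two_mul_inner_sub_theta_mean (θ : ℝ) (x y : V) :
    2 * ⟪y - x, θ • y + (1 - θ) • x⟫ = ‖y‖ ^ 2 - ‖x‖ ^ 2 + (2 * θ - 1) * ‖y - x‖ ^ 2 := by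
  rw [norm_sub_sq_real]
  simp only [inner_sub_left, inner_add_right, real_inner_smul_right, real_inner_self_eq_norm_sq,
    real_inner_comm y x]
  ring

theorem norm_sq_le_of_theta_step {x y f : V} {A C₀ τ θ : ℝ} (hC₀ : 0 < C₀) (hτ : 0 < τ)
    (hθ : 1 / 2 ≤ θ) (hA : ‖θ • y + (1 - θ) • x‖ ^ 2 ≤ C₀ * A)
    (hstep : ⟪τ⁻¹ • (y - x), θ • y + (1 - θ) • x⟫ + A = ⟪f, θ • y + (1 - θ) • x⟫) :
    ‖y‖ ^ 2 ≤ ‖x‖ ^ 2 + C₀ / 2 * (τ * ‖f‖ ^ 2) := by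
  have henergy := two_mul_inner_sub_theta_mean θ x y
  set w := θ • y + (1 - θ) • x
  have hdissip : 0 ≤ (2 * θ - 1) * ‖y - x‖ ^ 2 := mul_nonneg (by linarith) (sq_nonneg _)
  have hinner : ⟪y - x, w⟫ = τ * (⟪f, w⟫ - A) := by
    rw [← hstep, real_inner_smul_left]
    field_simp
    ring
  have hyoung : ⟪f, w⟫ - A ≤ C₀ / 4 * ‖f‖ ^ 2 := by
    refine le_of_mul_le_mul_left ?_ hC₀
    have := mul_le_mul_of_nonneg_left (real_inner_le_norm f w) hC₀.le
    linarith [sq_nonneg (C₀ / 2 * ‖f‖ - ‖w‖)]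
  linarith [mul_le_mul_of_nonneg_left hyoung hτ.le]

theorem norm_sq_le_of_theta_scheme {a : V → V → ℝ} {C₀ θ : ℝ} {N : ℕ} {τ : ℕ → ℝ} {η f : ℕ → V}
    (hC₀ : 0 < C₀) (ha : ∀ v, ‖v‖ ^ 2 ≤ C₀ * a v v) (hτ : ∀ n < N, 0 < τ n) (hθ : 1 / 2 ≤ θ)
    (hscheme : ∀ n < N, ∀ v, ⟪(τ n)⁻¹ • (η (n + 1) - η n), v⟫
      + a (θ • η (n + 1) + (1 - θ) • η n) v = ⟪f n, v⟫) :
    ‖η N‖ ^ 2 ≤ ‖η 0‖ ^ 2 + C₀ / 2 * ∑ n ∈ Finset.range N, τ n * ‖f n‖ ^ 2 := by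
  have hsum : ∑ n ∈ Finset.range N, (‖η (n + 1)‖ ^ 2 - ‖η n‖ ^ 2)
      ≤ ∑ n ∈ Finset.range N, C₀ / 2 * (τ n * ‖f n‖ ^ 2) := by
    refine Finset.sum_le_sum fun n hn => ?_
    have hn : n < N := Finset.mem_range.1 hn
    linarith [norm_sq_le_of_theta_step hC₀ (hτ n hn) hθ (ha _) (hscheme n hn _)]
  rw [Finset.sum_range_sub fun n => ‖η n‖ ^ 2, ← Finset.mul_sum] at hsum
  linarith

theorem theta_scheme_L2_convergence_general {a : V → V → ℝ} {C₀ θ τ : ℝ} {N : ℕ} {t : ℕ → ℝ}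
    {u u' u'' ρ ρ' : ℝ → V} {η : ℕ → V} (hC₀ : 0 < C₀) (ha : ∀ v, ‖v‖ ^ 2 ≤ C₀ * a v v)
    (ht : StrictMono t) (hτ : ∀ n < N, t (n + 1) - t n ≤ τ) (hθ : 1 / 2 ≤ θ)
    (hu : ∀ s ∈ Icc (t 0) (t N), HasDerivWithinAt u (u' s) (Icc (t 0) (t N)) s)
    (hu' : ∀ s ∈ Icc (t 0) (t N), HasDerivWithinAt u' (u'' s) (Icc (t 0) (t N)) s)
    (hu'' : MemLp u'' 2 (volume.restrict (Icc (t 0) (t N))))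
    (hρ : ∀ s ∈ Icc (t 0) (t N), HasDerivWithinAt ρ (ρ' s) (Icc (t 0) (t N)) s)
    (hρ' : MemLp ρ' 2 (volume.restrict (Icc (t 0) (t N))))
    (hscheme : ∀ n < N, ∀ v, ⟪(t (n + 1) - t n)⁻¹ • (η (n + 1) - η n), v⟫
      + a (θ • η (n + 1) + (1 - θ) • η n) v
        = ⟪thetaDefect θ u u' (t n) (t (n + 1)) - slope ρ (t n) (t (n + 1)), v⟫) :
    ‖η N‖ ^ 2 ≤ ‖η 0‖ ^ 2 + C₀ * (∫ s in t 0..t N, ‖ρ' s‖ ^ 2)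
      + C₀ * ((θ ^ 2 - θ + 1 / 3) * τ ^ 2) * ∫ s in t 0..t N, ‖u'' s‖ ^ 2 := by
  have hsource (n) (hn : n < N) :
      (t (n + 1) - t n) * ‖thetaDefect θ u u' (t n) (t (n + 1)) - slope ρ (t n) (t (n + 1))‖ ^ 2
        ≤ 2 * ((∫ s in t n..t (n + 1), ‖ρ' s‖ ^ 2)
          + (θ ^ 2 - θ + 1 / 3) * τ ^ 2 * ∫ s in t n..t (n + 1), ‖u'' s‖ ^ 2) := by
    have hsub : Icc (t n) (t (n + 1)) ⊆ Icc (t 0) (t N) :=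
      Icc_subset_Icc (ht.monotone n.zero_le) (ht.monotone hn)
    have hrestrict := Measure.restrict_mono hsub (le_refl volume)
    have hstep : t n < t (n + 1) := ht n.lt_succ_self
    refine (sub_mul_norm_thetaDefect_sub_slope_sq_le θ hstep
      (fun s hs => (hu s (hsub hs)).mono hsub) (fun s hs => (hu' s (hsub hs)).mono hsub)
      (hu''.mono_measure hrestrict) (fun s hs => (hρ s (hsub hs)).mono hsub)
      (hρ'.mono_measure hrestrict)).trans ?_
    gcongr
    · exact integral_nonneg hstep.le fun _ _ => sq_nonneg _
    · nlinarith [sq_nonneg (θ - 1 / 2)]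
    · exact hτ n hn
  have hstab := norm_sq_le_of_theta_scheme hC₀ ha (fun n _ => sub_pos.2 (ht n.lt_succ_self)) hθ
    hscheme
  have hsum := Finset.sum_le_sum fun n hn => hsource n (Finset.mem_range.1 hn)
  rw [← Finset.mul_sum, Finset.sum_add_distrib, ← Finset.mul_sum,
    sum_integral_norm_sq_adjacent_intervals ht.monotone hρ',
    sum_integral_norm_sq_adjacent_intervals ht.monotone hu''] at hsum
  linarith [mul_le_mul_of_nonneg_left hsum (half_pos hC₀).le]

end

/-- Abstract first-order L² convergence of the implicit θ-scheme, `θ ∈ [1/2, 1]`: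
`‖η^N‖² ≤ ‖η⁰‖² + C₀ ∫₀ᵀ ‖ρ'‖² + C₀ τ² ∫₀ᵀ ‖u''‖²`. -/
theorem theta_scheme_L2_convergence
    {V : Type*} [NormedAddCommGroup V] [InnerProductSpace ℝ V]
    (a : V →ₗ[ℝ] V →ₗ[ℝ] ℝ)
    (hsym : ∀ x y : V, a x y = a y x)
    (hpos : ∀ v : V, 0 ≤ a v v)
    (C₀ : ℝ) (hC₀ : 0 < C₀)
    (hpoincare : ∀ v : V, ‖v‖ ^ 2 ≤ C₀ * a v v)
    (τ : ℝ) (hτ : 0 < τ) (N : ℕ) (hN : 1 ≤ N) (T : ℝ) (hT : T = N * τ)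
    (θ : ℝ) (hθ : θ ∈ Set.Icc (1 / 2 : ℝ) 1)
    (u u' u'' ρ ρ' : ℝ → V)
    (hu : ∀ t ∈ Icc (0 : ℝ) T, HasDerivWithinAt u (u' t) (Icc 0 T) t)
    (hu' : ∀ t ∈ Icc (0 : ℝ) T, HasDerivWithinAt u' (u'' t) (Icc 0 T) t)
    (hu'' : ContinuousOn u'' (Icc 0 T))
    (hρ : ∀ t ∈ Icc (0 : ℝ) T, HasDerivWithinAt ρ (ρ' t) (Icc 0 T) t)
    (hρ' : ContinuousOn ρ' (Icc 0 T))
    (η : ℕ → V)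
    (hscheme : ∀ n, 1 ≤ n → n ≤ N → ∀ v : V,
      ⟪(1 / τ) • (η n - η (n - 1)), v⟫ + a (θ • η n + (1 - θ) • η (n - 1)) v
        = -⟪(1 / τ) • (ρ ((n : ℝ) * τ) - ρ (((n : ℝ) - 1) * τ)), v⟫
          + ⟪(1 / τ) • (u ((n : ℝ) * τ) - u (((n : ℝ) - 1) * τ))
              - (θ • u' ((n : ℝ) * τ) + (1 - θ) • u' (((n : ℝ) - 1) * τ)), v⟫) :
    ‖η N‖ ^ 2 ≤ ‖η 0‖ ^ 2 + C₀ * (∫ s in (0 : ℝ)..T, ‖ρ' s‖ ^ 2)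
      + C₀ * τ ^ 2 * ∫ s in (0 : ℝ)..T, ‖u'' s‖ ^ 2 := by
  subst hT
  have hzero : (0 : ℝ) = (0 : ℕ) * τ := by simp
  have hgrid (n : ℕ) : ((n : ℝ) + 1) * τ - n * τ = τ := by ring
  have hscheme' (n) (hn : n < N) (v : V) := hscheme (n + 1) n.succ_pos hn v
  simp only [neg_add_eq_sub, ← inner_sub_left] at hscheme'
  rw [hzero] at hu hu' hu'' hρ hρ' ⊢
  refine (theta_scheme_L2_convergence_general (a := fun x y => a x y) (t := fun n => n * τ)
    (τ := τ) hC₀ hpoincare (Nat.strictMono_cast.mul_const hτ) (fun n _ => by simp [hgrid]) hθ.1 hu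
    hu' (memLp_restrict_of_continuousOn isCompact_Icc hu'' 2) hρ
    (memLp_restrict_of_continuousOn isCompact_Icc hρ' 2)
    (by simpa [thetaDefect, slope_def_module, hgrid] using hscheme')).trans ?_
  gcongr
  · exact integral_nonneg (by gcongr; exact N.zero_le) fun _ _ => sq_nonneg _
  · exact mul_le_of_le_one_left (sq_nonneg τ) (by nlinarith [hθ.1, hθ.2])
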